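/- Noether's theorem (N-th order, r parameters). Suppose ζ_α : ℝⁿ → ℝⁿ and ψ_{α,B} : ℝⁿ → ℝ (α = 1,…,r; B = 1,…,f) are smooth, and set ψ̄_{α,B}(x) := ψ_{α,B}(x) − ζ_α^σ(x) ∂_σΦ_B(x). Assume the infinitesimal invariance identity holds along Φ: for every α and every x ∈ ℝⁿ, ∂_λ[ ζ_α^λ(x) · L(x, jetΦ(x)) ] + Σ_{B=1}^{f} Σ_{X=0}^{N} (∂_{μ₁}⋯∂_{μ_X} ψ̄_{α,B})(x) · [∂L/∂q^X_{B,μ₁…μ_X} along the jet of Φ] = 0. If moreover Φ satisfies the Euler–Lagrange equations E_B ≡ 0 on ℝⁿ, then for each α = 1,…,r the current j_α^λ(x) := ζ_α^λ(x) L(x, jetΦ(x)) + Σ_{B=1}^{f} Σ_{Z=0}^{N−1} (∂_{ν₁}⋯∂_{ν_Z} ψ̄_{α,B})(x) · K^{Bλν₁…ν_Z}(x) satisfies the continuity equation ∂_λ j_α^λ(x) = 0 for all x ∈ ℝⁿ. -/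

import Mathlib

open scoped BigOperators

/-- Index of a jet variable: derivative order `X ≤ N`, field index `B`,
and a multi-index of coordinate directions of length `X`. -/
abbrev JIdx (n f N : ℕ) : Type := Σ X : Fin (N + 1), Fin f × (Fin (X : ℕ) → Fin n)

/-- The (finite-dimensional) space of jet variables `q = (q^X_{B,λ₁…λ_X})`. -/
abbrev Jet (n f N : ℕ) : Type := JIdx n f N → ℝ

/-- Partial derivative in the `i`-th coordinate direction. -/
noncomputable def pd {n : ℕ} (i : Fin n) (F : (Fin n → ℝ) → ℝ) (x : Fin n → ℝ) : ℝ :=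
  fderiv ℝ F x (Pi.single i 1)

/-- Iterated partial derivative along a list of coordinate directions. -/
noncomputable def pds {n : ℕ} : List (Fin n) → ((Fin n → ℝ) → ℝ) → (Fin n → ℝ) → ℝ
  | [], F => F
  | i :: l, F => pd i (pds l F)

/-- The `N`-jet of the family of fields `Φ` at the point `x`:
the collection `(Φ_B(x), ∂Φ_B(x), …, ∂^N Φ_B(x))`. -/
noncomputable def jet {n f N : ℕ} (Φ : Fin f → (Fin n → ℝ) → ℝ) (x : Fin n → ℝ) :
    Jet n f N :=
  fun idx => pds (List.ofFn idx.2.2) (Φ idx.2.1) x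

/-- `∂L/∂q_idx` evaluated along the jet of `Φ`. -/
noncomputable def dLdq {n f N : ℕ} (L : (Fin n → ℝ) → Jet n f N → ℝ)
    (Φ : Fin f → (Fin n → ℝ) → ℝ) (idx : JIdx n f N) (x : Fin n → ℝ) : ℝ :=
  fderiv ℝ (L x) (jet Φ x) (Pi.single idx 1)

/-- The jet with the multi-index of the order-`X` variables permuted by `σ`. -/
def permJet {n f N : ℕ} (X : Fin (N + 1)) (σ : Equiv.Perm (Fin (X : ℕ)))
    (q : Jet n f N) : Jet n f N :=
  fun idx =>
    if h : idx.1 = X then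
      q ⟨idx.1, idx.2.1, fun i =>
        idx.2.2 (Fin.cast (congrArg Fin.val h).symm (σ (Fin.cast (congrArg Fin.val h) i)))⟩
    else q idx

/-- The Euler–Lagrange expression `E_B(x)`. -/
noncomputable def EulerLagrange {n f N : ℕ} (L : (Fin n → ℝ) → Jet n f N → ℝ)
    (Φ : Fin f → (Fin n → ℝ) → ℝ) (B : Fin f) (x : Fin n → ℝ) : ℝ :=
  ∑ X : Fin (N + 1), ∑ lam : Fin (X : ℕ) → Fin n,
    (-1 : ℝ) ^ (X : ℕ) * pds (List.ofFn lam) (dLdq L Φ ⟨X, B, lam⟩) x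

/-- The coefficients `K^{Bλν₁…ν_Z}(x)` of the boundary/divergence term. -/
noncomputable def Kcur {n f N : ℕ} (L : (Fin n → ℝ) → Jet n f N → ℝ)
    (Φ : Fin f → (Fin n → ℝ) → ℝ) (B : Fin f) (lam : Fin n) (Z : Fin N)
    (nu : Fin (Z : ℕ) → Fin n) (x : Fin n → ℝ) : ℝ :=
  ∑ Y : Fin (N - (Z : ℕ)), ∑ mu : Fin (Y : ℕ) → Fin n,
    (-1 : ℝ) ^ (Y : ℕ) *
      pds (List.ofFn mu)
        (dLdq L Φ
          ⟨⟨1 + (Y : ℕ) + (Z : ℕ), by have h1 := Y.isLt; have h2 := Z.isLt; omega⟩, B,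
            Fin.append (Fin.append (fun _ : Fin 1 => lam) mu) nu⟩) x

/-- The field-form variation `ψ̄_{α,B}(x) = ψ_{α,B}(x) − ζ_α^σ(x) ∂_σ Φ_B(x)`. -/
noncomputable def psibar {n f r : ℕ} (ζ : Fin r → (Fin n → ℝ) → Fin n → ℝ)
    (ψ : Fin r → Fin f → (Fin n → ℝ) → ℝ) (Φ : Fin f → (Fin n → ℝ) → ℝ)
    (a : Fin r) (B : Fin f) (x : Fin n → ℝ) : ℝ :=
  ψ a B x - ∑ σ : Fin n, ζ a x σ * pd σ (Φ B) x

/-!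
Write `u_B = ψ̄_{α,B}` and `P^μ_B = ∂L/∂q_{B,μ}`, and let `D(Z, Y) = (-1)^Y ∑ ∂_ν u · ∂_μ P^{μν}`
with `Z` derivatives on `u` and `Y` on `P`. Because the `∂_λ` commute and `P` is symmetric in its
directions, it does not matter which derivative is moved, and the product rule gives
`D(Z + 1, Y) - D(Z, Y + 1)` as the divergence of the part of the current with these orders. Summed
over the triangle `Z + Y < N` this telescopes along the antidiagonals to `∑ D(X, 0) - ∑ D(0, X)`,
the field part of the invariance identity minus `∑ u_B E_B`.
-/

open scoped ContDiff

section Sums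

lemma sum_ofFn_succ {ι M : Type*} [Fintype ι] [AddCommMonoid M] {k : ℕ} (F : List ι → M) :
    ∑ v : Fin (k + 1) → ι, F (List.ofFn v) =
      ∑ i : ι, ∑ v : Fin k → ι, F (i :: List.ofFn v) := by
  rw [← (Fin.consEquiv fun _ : Fin (k + 1) => ι).sum_comp, Fintype.sum_prod_type]
  simp [Fin.consEquiv, List.ofFn_succ]

lemma sum_triangle_telescope {M : Type*} [AddCommGroup M] (D : ℕ → ℕ → M) (N : ℕ) :
    ∑ Z : Fin N, ∑ Y : Fin (N - Z), (D (Z + 1) Y - D Z (Y + 1)) =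
      ∑ X : Fin (N + 1), D X 0 - ∑ X : Fin (N + 1), D 0 X := by
  have antidiagonal (m : ℕ) :
      ∑ k ∈ Finset.range (m + 1), (D (k + 1) (m - k) - D k (m - k + 1)) =
        D (m + 1) 0 - D 0 (m + 1) := by
    have := Finset.sum_range_sub (fun k => D k (m + 1 - k)) (m + 1)
    rw [Nat.sub_self, Nat.sub_zero] at this
    rw [← this]
    refine Finset.sum_congr rfl fun k hk => ?_
    rw [Nat.add_sub_add_right, Nat.sub_add_comm (Finset.mem_range_succ_iff.mp hk)]
  calc ∑ Z : Fin N, ∑ Y : Fin (N - Z), (D (Z + 1) Y - D Z (Y + 1))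
      = ∑ Z ∈ Finset.range N, ∑ Y ∈ Finset.range (N - Z), (D (Z + 1) Y - D Z (Y + 1)) := by
        simp only [Finset.sum_range]
    _ = ∑ m ∈ Finset.range N, (D (m + 1) 0 - D 0 (m + 1)) := by
        rw [← Finset.sum_range_diag_flip N fun Z Y => D (Z + 1) Y - D Z (Y + 1)]
        exact Finset.sum_congr rfl fun m _ => antidiagonal m
    _ = ∑ X : Fin (N + 1), D X 0 - ∑ X : Fin (N + 1), D 0 X := by
        simp only [Fin.sum_univ_succ, Finset.sum_sub_distrib, Finset.sum_range, Fin.val_zero,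
          Fin.val_succ, add_sub_add_left_eq_sub]

end Sums

lemma exists_perm_comp_of_ofFn_perm {α : Type*} {m : ℕ} {v w : Fin m → α}
    (h : (List.ofFn v).Perm (List.ofFn w)) : ∃ σ : Equiv.Perm (Fin m), v = w ∘ σ := by
  classical
  have fiber_card (c : α) : Fintype.card {i // v i = c} = Fintype.card {i // w i = c} := by
    have := congrArg (Multiset.count c) (Multiset.coe_eq_coe.2 h)
    simpa only [← Fin.univ_val_map, Multiset.count_map, eq_comm (a := c), Fintype.card_subtype,
      Finset.card_def, Finset.filter_val] using this
  let e (c : α) : {i // v i = c} ≃ {i // w i = c} := Fintype.equivOfCardEq (fiber_card c)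
  exact ⟨Equiv.ofFiberEquiv e, funext fun i => (Equiv.ofFiberEquiv_map e i).symm⟩

lemma fderiv_apply_of_comp_eq {𝕜 E F : Type*} [NontriviallyNormedField 𝕜]
    [NormedAddCommGroup E] [NormedSpace 𝕜 E] [NormedAddCommGroup F] [NormedSpace 𝕜 F]
    {g : E → F} {M : E →L[𝕜] E} {p : E} (hg : DifferentiableAt 𝕜 g p) (hM : M p = p)
    (hgM : g ∘ M = g) (v : E) : fderiv 𝕜 g p (M v) = fderiv 𝕜 g p v := by
  have hcomp := fderiv_comp p (hM.symm ▸ hg) M.differentiableAt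
  rw [hgM, hM, M.fderiv] at hcomp
  exact (DFunLike.congr_fun hcomp v).symm

section PartialDerivatives

variable {n : ℕ} {F G : (Fin n → ℝ) → ℝ} {x : Fin n → ℝ}

lemma pd_add (hF : DifferentiableAt ℝ F x) (hG : DifferentiableAt ℝ G x) (i : Fin n) :
    pd i (fun y => F y + G y) x = pd i F x + pd i G x := by
  simp only [pd, fderiv_fun_add hF hG, add_apply]

lemma pd_const_mul (hF : DifferentiableAt ℝ F x) (c : ℝ) (i : Fin n) :
    pd i (fun y => c * F y) x = c * pd i F x := by
  simp only [pd, fderiv_const_mul hF, smul_apply, smul_eq_mul]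

lemma pd_mul (hF : DifferentiableAt ℝ F x) (hG : DifferentiableAt ℝ G x) (i : Fin n) :
    pd i (fun y => F y * G y) x = pd i F x * G x + F x * pd i G x := by
  simp only [pd, fderiv_fun_mul hF hG, add_apply,
    smul_apply, smul_eq_mul]
  ring

lemma pd_sum {ι : Type*} {s : Finset ι} {H : ι → (Fin n → ℝ) → ℝ}
    (hH : ∀ k ∈ s, DifferentiableAt ℝ (H k) x) (i : Fin n) :
    pd i (fun y => ∑ k ∈ s, H k y) x = ∑ k ∈ s, pd i (H k) x := by
  simp only [pd, fderiv_fun_sum hH, sum_apply]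

lemma sum_pd_add_sum {ι : Type*} {s : Finset ι} {G : Fin n → (Fin n → ℝ) → ℝ}
    {H : ι → Fin n → (Fin n → ℝ) → ℝ} (hG : ∀ i, DifferentiableAt ℝ (G i) x)
    (hH : ∀ k ∈ s, ∀ i, DifferentiableAt ℝ (H k i) x) :
    ∑ i, pd i (fun y => G i y + ∑ k ∈ s, H k i y) x =
      ∑ i, pd i (G i) x + ∑ k ∈ s, ∑ i, pd i (H k i) x := by
  rw [Finset.sum_comm (s := s), ← Finset.sum_add_distrib]
  refine Finset.sum_congr rfl fun i _ => ?_
  rw [pd_add (hG i) (DifferentiableAt.fun_sum fun k hk => hH k hk i),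
    pd_sum fun k hk => hH k hk i]

lemma contDiff_pd (hF : ContDiff ℝ ∞ F) (i : Fin n) : ContDiff ℝ ∞ (pd i F) :=
  (hF.fderiv_right (m := ∞) le_rfl).clm_apply contDiff_const

lemma contDiff_pds (hF : ContDiff ℝ ∞ F) : ∀ l : List (Fin n), ContDiff ℝ ∞ (pds l F)
  | [] => hF
  | i :: l => contDiff_pd (contDiff_pds hF l) i

lemma pd_pd_apply (hF : ContDiff ℝ 2 F) (i j : Fin n) (x : Fin n → ℝ) :
    pd i (pd j F) x = fderiv ℝ (fderiv ℝ F) x (Pi.single i 1) (Pi.single j 1) := by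
  have hd : DifferentiableAt ℝ (fderiv ℝ F) x :=
    (hF.fderiv_right (m := 1) (by norm_num)).differentiable one_ne_zero x
  change fderiv ℝ (fun y => fderiv ℝ F y (Pi.single j 1)) x (Pi.single i 1) = _
  simp [fderiv_clm_apply hd (differentiableAt_const _)]

lemma pd_comm (hF : ContDiff ℝ 2 F) (i j : Fin n) : pd i (pd j F) = pd j (pd i F) := by
  funext x
  rw [pd_pd_apply hF, pd_pd_apply hF]
  exact hF.contDiffAt.isSymmSndFDerivAt (by simp) _ _

lemma pds_perm (hF : ContDiff ℝ ∞ F) {l l' : List (Fin n)} (h : l.Perm l') :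
    pds l F = pds l' F := by
  induction h with
  | nil => rfl
  | cons i _ ih => exact congrArg (pd i) ih
  | swap i j l => exact pd_comm (contDiff_infty.1 (contDiff_pds hF l) 2) j i
  | trans _ _ ih₁ ih₂ => exact ih₁.trans ih₂

end PartialDerivatives

section IntegrationByParts

variable {n : ℕ} {u : (Fin n → ℝ) → ℝ} {P : List (Fin n) → (Fin n → ℝ) → ℝ}

/-- The pairing `(-1)^Y ∑ ∂_{ν₁}⋯∂_{ν_Z} u · ∂_{μ₁}⋯∂_{μ_Y} P^{μ₁…μ_Y ν₁…ν_Z}`: the stage, in the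
repeated integration by parts of `∑ ∂_μ u · P^μ` at order `Z + Y`, at which `Y` derivatives have
been moved from `u` to `P`. -/
noncomputable def byPartsTerm (u : (Fin n → ℝ) → ℝ) (P : List (Fin n) → (Fin n → ℝ) → ℝ)
    (Z Y : ℕ) (x : Fin n → ℝ) : ℝ :=
  ∑ ν : Fin Z → Fin n, ∑ μ : Fin Y → Fin n,
    pds (List.ofFn ν) u x *
      ((-1 : ℝ) ^ Y * pds (List.ofFn μ) (P (List.ofFn μ ++ List.ofFn ν)) x)

/-- The `lam`-component of the vector field whose divergence is the difference between two
consecutive stages `byPartsTerm u P (Z + 1) Y` and `byPartsTerm u P Z (Y + 1)`. -/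
noncomputable def byPartsFlux (u : (Fin n → ℝ) → ℝ) (P : List (Fin n) → (Fin n → ℝ) → ℝ)
    (lam : Fin n) (Z Y : ℕ) (x : Fin n → ℝ) : ℝ :=
  ∑ ν : Fin Z → Fin n, ∑ μ : Fin Y → Fin n,
    pds (List.ofFn ν) u x *
      ((-1 : ℝ) ^ Y * pds (List.ofFn μ) (P (lam :: (List.ofFn μ ++ List.ofFn ν))) x)

lemma byPartsTerm_zero_right (Z : ℕ) (x : Fin n → ℝ) :
    byPartsTerm u P Z 0 x = ∑ ν : Fin Z → Fin n, pds (List.ofFn ν) u x * P (List.ofFn ν) x := by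
  simp [byPartsTerm, pds]

lemma byPartsTerm_zero_left (Y : ℕ) (x : Fin n → ℝ) :
    byPartsTerm u P 0 Y x =
      u x * ∑ μ : Fin Y → Fin n, (-1 : ℝ) ^ Y * pds (List.ofFn μ) (P (List.ofFn μ)) x := by
  simp [byPartsTerm, pds, Finset.mul_sum]

lemma byPartsTerm_succ_left (hPsymm : ∀ l l', l.Perm l' → P l = P l') (Z Y : ℕ)
    (x : Fin n → ℝ) :
    byPartsTerm u P (Z + 1) Y x =
      ∑ lam, ∑ ν : Fin Z → Fin n, ∑ μ : Fin Y → Fin n,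
        pd lam (pds (List.ofFn ν) u) x *
          ((-1 : ℝ) ^ Y * pds (List.ofFn μ) (P (lam :: (List.ofFn μ ++ List.ofFn ν))) x) := by
  unfold byPartsTerm
  rw [sum_ofFn_succ fun l => ∑ μ : Fin Y → Fin n,
    pds l u x * ((-1 : ℝ) ^ Y * pds (List.ofFn μ) (P (List.ofFn μ ++ l)) x)]
  simp only [hPsymm _ _ List.perm_middle, pds]

lemma byPartsTerm_succ_right (Z Y : ℕ) (x : Fin n → ℝ) :
    byPartsTerm u P Z (Y + 1) x =
      -∑ lam, ∑ ν : Fin Z → Fin n, ∑ μ : Fin Y → Fin n,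
        pds (List.ofFn ν) u x * ((-1 : ℝ) ^ Y *
          pd lam (pds (List.ofFn μ) (P (lam :: (List.ofFn μ ++ List.ofFn ν)))) x) := by
  have split_last (ν : Fin Z → Fin n) := sum_ofFn_succ (k := Y) fun l =>
    pds (List.ofFn ν) u x * ((-1 : ℝ) ^ (Y + 1) * pds l (P (l ++ List.ofFn ν)) x)
  simp only [byPartsTerm, split_last]
  rw [Finset.sum_comm]
  simp only [pds, List.cons_append, pow_succ, mul_neg, mul_one, neg_mul,
    Finset.sum_neg_distrib]

lemma contDiff_byPartsFlux (hu : ContDiff ℝ ∞ u) (hP : ∀ l, ContDiff ℝ ∞ (P l)) (lam : Fin n)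
    (Z Y : ℕ) : ContDiff ℝ ∞ (byPartsFlux u P lam Z Y) :=
  ContDiff.sum fun _ _ => ContDiff.sum fun _ _ =>
    (contDiff_pds hu _).mul (contDiff_const.mul (contDiff_pds (hP _) _))

lemma pd_byPartsFlux (hu : ContDiff ℝ ∞ u) (hP : ∀ l, ContDiff ℝ ∞ (P l)) (lam : Fin n)
    (Z Y : ℕ) (x : Fin n → ℝ) :
    pd lam (byPartsFlux u P lam Z Y) x =
      ∑ ν : Fin Z → Fin n, ∑ μ : Fin Y → Fin n,
        (pd lam (pds (List.ofFn ν) u) x *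
            ((-1 : ℝ) ^ Y * pds (List.ofFn μ) (P (lam :: (List.ofFn μ ++ List.ofFn ν))) x) +
          pds (List.ofFn ν) u x * ((-1 : ℝ) ^ Y *
            pd lam (pds (List.ofFn μ) (P (lam :: (List.ofFn μ ++ List.ofFn ν)))) x)) := by
  have du (l : List (Fin n)) : Differentiable ℝ (pds l u) :=
    (contDiff_pds hu l).differentiable (by simp)
  have dP (l l' : List (Fin n)) : Differentiable ℝ (pds l (P l')) :=
    (contDiff_pds (hP l') l).differentiable (by simp)
  have dterm (l l' l'' : List (Fin n)) :
      Differentiable ℝ fun y => pds l u y * ((-1 : ℝ) ^ Y * pds l' (P l'') y) :=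
    (du l).mul ((dP l' l'').const_mul _)
  unfold byPartsFlux
  rw [pd_sum fun ν _ => (Differentiable.fun_sum fun μ _ => dterm _ _ _) x]
  refine Finset.sum_congr rfl fun ν _ => ?_
  rw [pd_sum fun μ _ => dterm _ _ _ x]
  refine Finset.sum_congr rfl fun μ _ => ?_
  rw [pd_mul (du _ x) ((dP _ _ x).const_mul _), pd_const_mul (dP _ _ x)]

lemma sum_pd_byPartsFlux (hu : ContDiff ℝ ∞ u) (hP : ∀ l, ContDiff ℝ ∞ (P l))
    (hPsymm : ∀ l l', l.Perm l' → P l = P l') (Z Y : ℕ) (x : Fin n → ℝ) :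
    ∑ lam, pd lam (byPartsFlux u P lam Z Y) x =
      byPartsTerm u P (Z + 1) Y x - byPartsTerm u P Z (Y + 1) x := by
  simp only [pd_byPartsFlux hu hP, byPartsTerm_succ_left hPsymm, byPartsTerm_succ_right,
    sub_neg_eq_add, Finset.sum_add_distrib]

lemma sum_pd_sum_byPartsFlux (hu : ContDiff ℝ ∞ u) (hP : ∀ l, ContDiff ℝ ∞ (P l))
    (hPsymm : ∀ l l', l.Perm l' → P l = P l') (N : ℕ) (x : Fin n → ℝ) :
    ∑ lam, pd lam (fun y => ∑ Z : Fin N, ∑ Y : Fin (N - Z), byPartsFlux u P lam Z Y y) x =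
      ∑ X : Fin (N + 1), byPartsTerm u P X 0 x - ∑ X : Fin (N + 1), byPartsTerm u P 0 X x := by
  have diff (lam : Fin n) (Z Y : ℕ) : Differentiable ℝ (byPartsFlux u P lam Z Y) :=
    (contDiff_byPartsFlux hu hP lam Z Y).differentiable (by simp)
  have pd_distrib (lam : Fin n) :
      pd lam (fun y => ∑ Z : Fin N, ∑ Y : Fin (N - Z), byPartsFlux u P lam Z Y y) x =
        ∑ Z : Fin N, ∑ Y : Fin (N - Z), pd lam (byPartsFlux u P lam Z Y) x := by
    rw [pd_sum fun Z _ => (Differentiable.fun_sum fun Y _ => diff lam _ _) x]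
    exact Finset.sum_congr rfl fun Z _ => pd_sum (fun Y _ => diff lam _ _ x) lam
  rw [← sum_triangle_telescope fun Z Y => byPartsTerm u P Z Y x]
  simp only [pd_distrib, ← sum_pd_byPartsFlux hu hP hPsymm]
  rw [Finset.sum_comm]
  exact Finset.sum_congr rfl fun Z _ => Finset.sum_comm

end IntegrationByParts

section JetSymmetry

variable {n f N : ℕ} {L : (Fin n → ℝ) → Jet n f N → ℝ} {Φ : Fin f → (Fin n → ℝ) → ℝ}

lemma contDiff_jet (hΦ : ∀ B, ContDiff ℝ ∞ (Φ B)) :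
    ContDiff ℝ ∞ fun x => (jet Φ x : Jet n f N) :=
  contDiff_pi.2 fun idx => contDiff_pds (hΦ idx.2.1) _

lemma contDiff_dLdq (hL : ContDiff ℝ ∞ fun p : (Fin n → ℝ) × Jet n f N => L p.1 p.2)
    (hΦ : ∀ B, ContDiff ℝ ∞ (Φ B)) (idx : JIdx n f N) : ContDiff ℝ ∞ (dLdq L Φ idx) :=
  (ContDiff.fderiv hL (contDiff_jet hΦ) le_rfl).clm_apply contDiff_const

lemma permJet_jet (hΦ : ∀ B, ContDiff ℝ ∞ (Φ B)) (X : Fin (N + 1)) (σ : Equiv.Perm (Fin X))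
    (x : Fin n → ℝ) : permJet X σ (jet Φ x : Jet n f N) = jet Φ x := by
  funext ⟨Y, B, ν⟩
  by_cases h : Y = X
  · subst h
    simp only [permJet, jet, dite_true]
    exact congrFun (pds_perm (hΦ B) (σ.ofFn_comp_perm ν)) x
  · simp [permJet, h]

lemma permJet_single (X : Fin (N + 1)) (σ : Equiv.Perm (Fin X)) (B : Fin f)
    (μ : Fin X → Fin n) :
    permJet X σ (Pi.single (⟨X, B, μ ∘ σ⟩ : JIdx n f N) (1 : ℝ)) = Pi.single ⟨X, B, μ⟩ 1 := by
  funext ⟨Y, C, ν⟩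
  by_cases h : Y = X
  · subst h
    have comp_eq : ν ∘ σ = μ ∘ σ ↔ ν = μ := σ.surjective.injective_comp_right.eq_iff
    simp [permJet, Pi.single_apply, ← comp_eq, Function.comp_def]
  · simp [permJet, h]

/-- `permJet` as a continuous linear map, so that the chain rule applies to it. -/
noncomputable def permJetL (X : Fin (N + 1)) (σ : Equiv.Perm (Fin X)) :
    Jet n f N →L[ℝ] Jet n f N :=
  LinearMap.toContinuousLinearMap
    { toFun := permJet X σ
      map_add' := fun p q => by
        funext idx
        simp only [permJet, Pi.add_apply]
        split_ifs <;> rfl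
      map_smul' := fun c q => by
        funext idx
        simp only [permJet, Pi.smul_apply]
        split_ifs <;> rfl }

lemma dLdq_comp_perm {X : Fin (N + 1)} {σ : Equiv.Perm (Fin X)} {x : Fin n → ℝ}
    (hΦ : ∀ B, ContDiff ℝ ∞ (Φ B)) (hL : DifferentiableAt ℝ (L x) (jet Φ x))
    (hLsymm : ∀ q, L x (permJet X σ q) = L x q) (B : Fin f) (μ : Fin X → Fin n) :
    dLdq L Φ ⟨X, B, μ ∘ σ⟩ x = dLdq L Φ ⟨X, B, μ⟩ x := by
  unfold dLdq
  rw [← permJet_single X σ B μ]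
  exact (fderiv_apply_of_comp_eq (M := permJetL X σ) hL (permJet_jet hΦ X σ x)
    (funext hLsymm) _).symm

/-- The coefficient `∂L/∂q_{B,λ₁…λ_X}` along the jet of `Φ`, indexed by the list of its directions
instead of a tuple of dependent length. Lists longer than `N` get the value `0`. -/
noncomputable def dLdqList (L : (Fin n → ℝ) → Jet n f N → ℝ) (Φ : Fin f → (Fin n → ℝ) → ℝ)
    (B : Fin f) (l : List (Fin n)) : (Fin n → ℝ) → ℝ :=
  if h : l.length < N + 1 then dLdq L Φ ⟨⟨l.length, h⟩, B, l.get⟩ else 0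

lemma dLdqList_ofFn (B : Fin f) (X : Fin (N + 1)) (μ : Fin X → Fin n) :
    dLdqList L Φ B (List.ofFn μ) = dLdq L Φ ⟨X, B, μ⟩ := by
  obtain ⟨l, hl, rfl⟩ : ∃ (l : List (Fin n)) (hl : l.length = X), μ = l.get ∘ Fin.cast hl.symm :=
    ⟨List.ofFn μ, List.length_ofFn, by funext i; simp⟩
  obtain ⟨k, hk⟩ := X
  dsimp only at hl
  subst hl
  calc dLdqList L Φ B (List.ofFn l.get) = dLdqList L Φ B l := by rw [List.ofFn_get]
    _ = dLdq L Φ ⟨⟨l.length, hk⟩, B, l.get⟩ := dif_pos hk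

lemma contDiff_dLdqList (hL : ContDiff ℝ ∞ fun p : (Fin n → ℝ) × Jet n f N => L p.1 p.2)
    (hΦ : ∀ B, ContDiff ℝ ∞ (Φ B)) (B : Fin f) (l : List (Fin n)) :
    ContDiff ℝ ∞ (dLdqList L Φ B l) := by
  unfold dLdqList
  split_ifs
  · exact contDiff_dLdq hL hΦ _
  · exact contDiff_const

lemma dLdqList_perm (hΦ : ∀ B, ContDiff ℝ ∞ (Φ B)) (hL : ∀ x, Differentiable ℝ (L x))
    (hLsymm : ∀ (x : Fin n → ℝ) (q : Jet n f N) (X : Fin (N + 1)) (σ : Equiv.Perm (Fin X)),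
      L x (permJet X σ q) = L x q)
    (B : Fin f) (l l' : List (Fin n)) (h : l.Perm l') :
    dLdqList L Φ B l = dLdqList L Φ B l' := by
  by_cases hl : l.length < N + 1
  · obtain ⟨μ, rfl⟩ : ∃ μ : Fin l.length → Fin n, l' = List.ofFn μ :=
      ⟨l'.get ∘ Fin.cast h.length_eq, List.ext_getElem (by simp [h.length_eq]) (by simp)⟩
    obtain ⟨σ, hσ⟩ : ∃ σ : Equiv.Perm (Fin l.length), l.get = μ ∘ σ :=
      exists_perm_comp_of_ofFn_perm (by rwa [List.ofFn_get])
    rw [dLdqList_ofFn B ⟨l.length, hl⟩ μ, dLdqList, dif_pos hl, hσ]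
    exact funext fun x => dLdq_comp_perm hΦ (hL x _) (hLsymm x · ⟨l.length, hl⟩ σ) B μ
  · simp only [dLdqList, dif_neg hl, dif_neg (h.length_eq ▸ hl)]

end JetSymmetry

section NoetherCurrent

variable {n f N : ℕ} {L : (Fin n → ℝ) → Jet n f N → ℝ} {Φ : Fin f → (Fin n → ℝ) → ℝ}

/-- The contribution `∑ ∂_{ν₁}⋯∂_{ν_Z} u · K^{B lam ν₁…ν_Z}` of a variation `u` of the single field
`Φ_B` to the `lam`-component of the Noether current. -/
noncomputable def fieldCurrent (L : (Fin n → ℝ) → Jet n f N → ℝ)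
    (Φ : Fin f → (Fin n → ℝ) → ℝ) (B : Fin f) (u : (Fin n → ℝ) → ℝ) (lam : Fin n)
    (x : Fin n → ℝ) : ℝ :=
  ∑ Z : Fin N, ∑ ν : Fin Z → Fin n, pds (List.ofFn ν) u x * Kcur L Φ B lam Z ν x

lemma Kcur_eq_sum_dLdqList (B : Fin f) (lam : Fin n) (Z : Fin N) (ν : Fin Z → Fin n)
    (x : Fin n → ℝ) :
    Kcur L Φ B lam Z ν x = ∑ Y : Fin (N - Z), ∑ μ : Fin Y → Fin n, (-1 : ℝ) ^ (Y : ℕ) *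
      pds (List.ofFn μ) (dLdqList L Φ B (lam :: (List.ofFn μ ++ List.ofFn ν))) x := by
  unfold Kcur
  refine Finset.sum_congr rfl fun Y _ => Finset.sum_congr rfl fun μ _ => ?_
  rw [← dLdqList_ofFn]
  simp only [List.ofFn_fin_append, List.ofFn_const, List.replicate_one, List.cons_append,
    List.nil_append]

lemma fieldCurrent_eq_sum_byPartsFlux (B : Fin f) (u : (Fin n → ℝ) → ℝ) (lam : Fin n) :
    fieldCurrent L Φ B u lam = fun x => ∑ Z : Fin N, ∑ Y : Fin (N - Z),
      byPartsFlux u (dLdqList L Φ B) lam Z Y x := by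
  funext x
  refine Finset.sum_congr rfl fun Z _ => ?_
  simp only [Kcur_eq_sum_dLdqList, byPartsFlux, Finset.mul_sum]
  exact Finset.sum_comm

lemma contDiff_fieldCurrent (hL : ContDiff ℝ ∞ fun p : (Fin n → ℝ) × Jet n f N => L p.1 p.2)
    (hΦ : ∀ B, ContDiff ℝ ∞ (Φ B)) {u : (Fin n → ℝ) → ℝ} (hu : ContDiff ℝ ∞ u) (B : Fin f)
    (lam : Fin n) : ContDiff ℝ ∞ (fieldCurrent L Φ B u lam) := by
  rw [fieldCurrent_eq_sum_byPartsFlux]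
  exact ContDiff.sum fun _ _ => ContDiff.sum fun _ _ =>
    contDiff_byPartsFlux hu (contDiff_dLdqList hL hΦ B) _ _ _

lemma EulerLagrange_eq_sum_dLdqList (B : Fin f) (x : Fin n → ℝ) :
    EulerLagrange L Φ B x = ∑ X : Fin (N + 1), ∑ μ : Fin X → Fin n,
      (-1 : ℝ) ^ (X : ℕ) * pds (List.ofFn μ) (dLdqList L Φ B (List.ofFn μ)) x := by
  simp only [EulerLagrange, dLdqList_ofFn]

theorem sum_pd_fieldCurrent
    (hL : ContDiff ℝ ∞ fun p : (Fin n → ℝ) × Jet n f N => L p.1 p.2)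
    (hLsymm : ∀ (x : Fin n → ℝ) (q : Jet n f N) (X : Fin (N + 1)) (σ : Equiv.Perm (Fin X)),
      L x (permJet X σ q) = L x q)
    (hΦ : ∀ B, ContDiff ℝ ∞ (Φ B)) {u : (Fin n → ℝ) → ℝ} (hu : ContDiff ℝ ∞ u) (B : Fin f)
    (x : Fin n → ℝ) :
    ∑ lam, pd lam (fieldCurrent L Φ B u lam) x =
      ∑ X : Fin (N + 1), ∑ μ : Fin X → Fin n, pds (List.ofFn μ) u x * dLdq L Φ ⟨X, B, μ⟩ x -
        u x * EulerLagrange L Φ B x := by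
  have hLx (x : Fin n → ℝ) : Differentiable ℝ (L x) :=
    (hL.comp (contDiff_prodMk_right x)).differentiable (by simp)
  simp only [fieldCurrent_eq_sum_byPartsFlux, sum_pd_sum_byPartsFlux hu
    (contDiff_dLdqList hL hΦ B) (dLdqList_perm hΦ hLx hLsymm B), byPartsTerm_zero_right,
    byPartsTerm_zero_left, EulerLagrange_eq_sum_dLdqList, dLdqList_ofFn, Finset.mul_sum]

lemma contDiff_psibar {r : ℕ} {ζ : Fin r → (Fin n → ℝ) → Fin n → ℝ}
    {ψ : Fin r → Fin f → (Fin n → ℝ) → ℝ} {a : Fin r} {B : Fin f} (hΦ : ContDiff ℝ ∞ (Φ B))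
    (hζ : ContDiff ℝ ∞ (ζ a)) (hψ : ContDiff ℝ ∞ (ψ a B)) :
    ContDiff ℝ ∞ (psibar ζ ψ Φ a B) :=
  hψ.sub <| ContDiff.sum fun σ _ => (contDiff_pi.1 hζ σ).mul (contDiff_pd hΦ σ)

end NoetherCurrent

/-- Noether's theorem, equations (25)–(27) of the paper:
if the infinitesimal invariance identity holds along `Φ` for an `r`-parameter family
of infinitesimal transformations with generators `ζ_α, ψ_α`, and `Φ` satisfies the
Euler–Lagrange equations, then each Noether current `j_α` is divergence free. -/
theorem noether_theorem {n f N r : ℕ} (hn : 2 ≤ n) (hf : 1 ≤ f) (hN : 1 ≤ N)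
    (L : (Fin n → ℝ) → Jet n f N → ℝ)
    (hL : ContDiff ℝ (⊤ : ℕ∞) (fun p : (Fin n → ℝ) × Jet n f N => L p.1 p.2))
    (hLsymm : ∀ (x : Fin n → ℝ) (q : Jet n f N) (X : Fin (N + 1))
      (σ : Equiv.Perm (Fin (X : ℕ))), L x (permJet X σ q) = L x q)
    (Φ : Fin f → (Fin n → ℝ) → ℝ) (hΦ : ∀ B, ContDiff ℝ (⊤ : ℕ∞) (Φ B))
    (ζ : Fin r → (Fin n → ℝ) → Fin n → ℝ) (hζ : ∀ a, ContDiff ℝ (⊤ : ℕ∞) (ζ a))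
    (ψ : Fin r → Fin f → (Fin n → ℝ) → ℝ) (hψ : ∀ a B, ContDiff ℝ (⊤ : ℕ∞) (ψ a B))
    (hinvariance : ∀ (a : Fin r) (x : Fin n → ℝ),
      (∑ lam : Fin n, pd lam (fun x' => ζ a x' lam * L x' (jet Φ x')) x)
        + (∑ B : Fin f, ∑ X : Fin (N + 1), ∑ mu : Fin (X : ℕ) → Fin n,
            pds (List.ofFn mu) (psibar ζ ψ Φ a B) x * dLdq L Φ ⟨X, B, mu⟩ x) = 0)
    (hEL : ∀ (B : Fin f) (x : Fin n → ℝ), EulerLagrange L Φ B x = 0) :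
    ∀ (a : Fin r) (x : Fin n → ℝ),
      ∑ lam : Fin n,
        pd lam
          (fun x' => ζ a x' lam * L x' (jet Φ x')
            + ∑ B : Fin f, ∑ Z : Fin N, ∑ nu : Fin (Z : ℕ) → Fin n,
                pds (List.ofFn nu) (psibar ζ ψ Φ a B) x' * Kcur L Φ B lam Z nu x') x
        = 0 := by
  intro a x
  have hu (B : Fin f) : ContDiff ℝ ∞ (psibar ζ ψ Φ a B) :=
    contDiff_psibar (hΦ B) (hζ a) (hψ a B)
  have hζL (lam : Fin n) : ContDiff ℝ ∞ fun y => ζ a y lam * L y (jet Φ y) :=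
    (contDiff_pi.1 (hζ a) lam).mul (hL.comp (contDiff_id.prodMk (contDiff_jet hΦ)))
  calc ∑ lam, pd lam (fun y => ζ a y lam * L y (jet Φ y) +
          ∑ B, fieldCurrent L Φ B (psibar ζ ψ Φ a B) lam y) x
      = ∑ lam, pd lam (fun y => ζ a y lam * L y (jet Φ y)) x +
          ∑ B, ∑ lam, pd lam (fieldCurrent L Φ B (psibar ζ ψ Φ a B) lam) x :=
        sum_pd_add_sum (fun lam => (hζL lam).differentiable (by simp) x) fun B _ lam =>
          (contDiff_fieldCurrent hL hΦ (hu B) B lam).differentiable (by simp) x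
    _ = ∑ lam, pd lam (fun y => ζ a y lam * L y (jet Φ y)) x +
          ∑ B, ∑ X : Fin (N + 1), ∑ μ : Fin X → Fin n,
            pds (List.ofFn μ) (psibar ζ ψ Φ a B) x * dLdq L Φ ⟨X, B, μ⟩ x := by
        simp only [sum_pd_fieldCurrent hL hLsymm hΦ (hu _), hEL, mul_zero, sub_zero]
    _ = 0 := hinvariance a x
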